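/- Let G=(V,A,τ) be a temporal graph with τ≤2 and let r∈V. Then G has a spanning ST-TOB with root r if and only if every vertex of G is temporally reachable from r. -/

import Mathlib

open scoped Classical

universe u

/-- A temporal arc `(u, v, s, t)`: tail `u`, head `v`, starting time `s`, arrival time `t`. -/
abbrev TArc (α : Type u) := α × α × ℕ × ℕ

/-- The tail vertex of a temporal arc. -/
def TArc.tail {α : Type u} (a : TArc α) : α := a.1

/-- The head vertex of a temporal arc. -/
def TArc.head {α : Type u} (a : TArc α) : α := a.2.1

/-- The starting time of a temporal arc. -/
def TArc.ts {α : Type u} (a : TArc α) : ℕ := a.2.2.1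

/-- The arrival time of a temporal arc. -/
def TArc.ta {α : Type u} (a : TArc α) : ℕ := a.2.2.2

/-- The elapsed time of a temporal arc. -/
def TArc.el {α : Type u} (a : TArc α) : ℕ := TArc.ta a - TArc.ts a

/-- A temporal graph `(V, A, τ)`. -/
structure TempGraph (α : Type u) where
  V : Finset α
  A : Finset (TArc α)
  τ : ℕ
  nonempty : V.Nonempty
  valid : ∀ a ∈ A, TArc.tail a ∈ V ∧ TArc.head a ∈ V ∧ TArc.tail a ≠ TArc.head a ∧
      1 ≤ TArc.ts a ∧ TArc.ts a ≤ TArc.ta a ∧ TArc.ta a ≤ τ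

variable {α : Type u}

/-- `IsWalk S u v L` : `L` is the list of arcs of a temporal `(u,v)`-walk using arcs from `S`
(the trivial walk, `L = []`, requires `u = v`). -/
def IsWalk (S : Finset (TArc α)) : α → α → List (TArc α) → Prop
  | u, v, [] => u = v
  | u, v, a :: L => a ∈ S ∧ TArc.tail a = u ∧ (∀ b ∈ L.head?, TArc.ta a ≤ TArc.ts b) ∧
      IsWalk S (TArc.head a) v L

/-- The starting time of a walk (`0` for the trivial walk). -/
def tsW (L : List (TArc α)) : ℕ := (L.map TArc.ts).headI

/-- The arrival time of a walk (`0` for the trivial walk). -/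
def taW (L : List (TArc α)) : ℕ := (L.map TArc.ta).getLastD 0

/-- The duration of a walk. -/
def durW (L : List (TArc α)) : ℕ := taW L - tsW L

/-- The travelling time of a walk. -/
def ttW (L : List (TArc α)) : ℕ := (L.map TArc.el).sum

/-- The waiting time of a walk. -/
def waitW (L : List (TArc α)) : ℕ :=
  (List.zipWith (fun a b => TArc.ts b - TArc.ta a) L L.tail).sum

/-- The final vertex of a walk starting at `u` with arc list `L`. -/
def endv (u : α) (L : List (TArc α)) : α := (L.map TArc.head).getLastD u

/-- The sequence of vertices of a walk starting at `u` with arc list `L`. -/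
def verts (u : α) (L : List (TArc α)) : List α := u :: L.map TArc.head

/-- A walk is a (temporal) path when its vertices are pairwise distinct. -/
def IsPathList (u : α) (L : List (TArc α)) : Prop := (verts u L).Nodup

/-- The six optimisation criteria: earliest arrival, fastest time, latest departure,
minimum transfers, minimum waiting time, shortest travelling time. -/
inductive DistKind : Type
  | EA | FT | LD | MT | MW | ST
  deriving DecidableEq

/-- The value of a walk for each criterion. -/
def wval : DistKind → List (TArc α) → ℕ
  | .EA, L => taW L
  | .FT, L => durW L
  | .LD, L => tsW L
  | .MT, L => L.length
  | .MW, L => waitW L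
  | .ST, L => ttW L

/-- `Realizes d S u v L` : `L` is a temporal `(u,v)`-walk within `S` attaining the optimum
(minimum, or maximum for `LD`) of the criterion `d` among all temporal `(u,v)`-walks in `S`. -/
def Realizes (d : DistKind) (S : Finset (TArc α)) (u v : α) (L : List (TArc α)) : Prop :=
  IsWalk S u v L ∧ ∀ L', IsWalk S u v L' →
    if d = DistKind.LD then wval d L' ≤ wval d L else wval d L ≤ wval d L'

/-- The distance value `d_G(u,v) ∈ ℕ∞` (`+∞` when `v` is not temporally reachable from `u`;
`LD_G(u,u) = τ + 1`). -/
noncomputable def distVal (d : DistKind) (G : TempGraph α) (u v : α) : ℕ∞ :=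
  if d = DistKind.LD then
    (if u = v then ((G.τ : ℕ∞) + 1)
     else if ∃ L, IsWalk G.A u v L then
       sSup {n : ℕ∞ | ∃ L, IsWalk G.A u v L ∧ n = (tsW L : ℕ∞)}
     else ⊤)
  else sInf {n : ℕ∞ | ∃ L, IsWalk G.A u v L ∧ n = (wval d L : ℕ∞)}

/-- Every vertex of `Vs` is temporally reachable from `r` using arcs from `S`. -/
def ReachAll (S : Finset (TArc α)) (Vs : Finset α) (r : α) : Prop :=
  ∀ v ∈ Vs, ∃ L, IsWalk S r v L

/-- `B` is a temporal out-branching (TOB) with root `r`: its arc set is a minimal set of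
temporal arcs such that every vertex of `B` is temporally reachable from `r`. -/
def IsTOB (B : TempGraph α) (r : α) : Prop :=
  r ∈ B.V ∧ ReachAll B.A B.V r ∧ ∀ S ⊂ B.A, ¬ ReachAll S B.V r

/-- `B` is a temporal subgraph of `G`. -/
def IsSubgraph (B G : TempGraph α) : Prop :=
  B.V ⊆ G.V ∧ B.A ⊆ G.A ∧ B.τ ≤ G.τ

/-- `B` is a `d`-TOB of `G` rooted at `r`. -/
def IsDTOB (d : DistKind) (G B : TempGraph α) (r : α) : Prop :=
  IsTOB B r ∧ IsSubgraph B G ∧ ∀ v ∈ B.V, distVal d B r v = distVal d G r v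

/-- `B` is a spanning `d`-TOB of `G` rooted at `r`. -/
def IsSpanningDTOB (d : DistKind) (G B : TempGraph α) (r : α) : Prop :=
  IsDTOB d G B r ∧ B.V = G.V

/-- `B` is a maximum `d`-TOB of `G` rooted at `r`. -/
def IsMaxDTOB (d : DistKind) (G B : TempGraph α) (r : α) : Prop :=
  IsDTOB d G B r ∧ ∀ B', IsDTOB d G B' r → B'.V.card ≤ B.V.card

/-- The in-degree of `v` with respect to the arc set `S`. -/
noncomputable def inDeg (S : Finset (TArc α)) (v : α) : ℕ :=
  (S.filter fun a => TArc.head a = v).card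

/-- A walk in a (static) digraph with arc set `E`. -/
def IsDWalk (E : Finset (α × α)) : α → α → List (α × α) → Prop
  | u, v, [] => u = v
  | u, v, e :: L => e ∈ E ∧ e.1 = u ∧ IsDWalk E e.2 v L

/-- The digraph `(Vs, E)` is an out-branching with root `r`: every `v ∈ Vs` is the end of
a unique `(r,v)`-walk. -/
def IsOutBranching (Vs : Finset α) (E : Finset (α × α)) (r : α) : Prop :=
  ∀ v ∈ Vs, ∃! L, IsDWalk E r v L

/-- The arc of the underlying multidigraph corresponding to a temporal arc. -/
def proj (a : TArc α) : α × α := (TArc.tail a, TArc.head a)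

/-- The temporal subgraph of `G` induced by a set of vertices `Z`. -/
noncomputable def induced (G : TempGraph α) (Z : Finset α) (hne : Z.Nonempty) (hZ : Z ⊆ G.V) :
    TempGraph α where
  V := Z
  A := G.A.filter fun a => TArc.tail a ∈ Z ∧ TArc.head a ∈ Z
  τ := G.τ
  nonempty := hne
  valid := by
    intro a ha
    simp only [Finset.mem_filter] at ha
    obtain ⟨haA, h1, h2⟩ := ha
    obtain ⟨-, -, h3, h4, h5, h6⟩ := G.valid a haA
    exact ⟨h1, h2, h3, h4, h5, h6⟩

/-- The reverse of a temporal arc with respect to lifetime `τ`. -/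
def TArc.rev (τ : ℕ) (a : TArc α) : TArc α :=
  (TArc.head a, TArc.tail a, τ + 1 - TArc.ta a, τ + 1 - TArc.ts a)

/-- The reverse of a temporal graph. -/
noncomputable def TempGraph.rev (G : TempGraph α) : TempGraph α where
  V := G.V
  A := G.A.image (TArc.rev G.τ)
  τ := G.τ
  nonempty := G.nonempty
  valid := by
    intro b hb
    simp only [Finset.mem_image] at hb
    obtain ⟨a, ha, rfl⟩ := hb
    obtain ⟨h1, h2, h3, h4, h5, h6⟩ := G.valid a ha
    refine ⟨h2, h1, Ne.symm h3, ?_, ?_, ?_⟩ <;>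
      simp only [TArc.rev, TArc.tail, TArc.head, TArc.ts, TArc.ta] at * <;> omega

/-- The reverse of a temporal walk. -/
def revWalk (τ : ℕ) (L : List (TArc α)) : List (TArc α) := (L.map (TArc.rev τ)).reverse

/-- Every vertex of `Vs` temporally reaches `r` using arcs from `S`. -/
def CoReachAll (S : Finset (TArc α)) (Vs : Finset α) (r : α) : Prop :=
  ∀ v ∈ Vs, ∃ L, IsWalk S v r L

/-- `B` is a temporal in-branching (TIB) with root `r`. -/
def IsTIB (B : TempGraph α) (r : α) : Prop :=
  r ∈ B.V ∧ CoReachAll B.A B.V r ∧ ∀ S ⊂ B.A, ¬ CoReachAll S B.V r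

/-- `B` is a `d`-TIB of `G` rooted at `r`. -/
def IsDTIB (d : DistKind) (G B : TempGraph α) (r : α) : Prop :=
  IsTIB B r ∧ IsSubgraph B G ∧ ∀ v ∈ B.V, distVal d B v r = distVal d G v r

/-- `B` is a maximum `d`-TIB of `G` rooted at `r`. -/
def IsMaxDTIB (d : DistKind) (G B : TempGraph α) (r : α) : Prop :=
  IsDTIB d G B r ∧ ∀ B', IsDTIB d G B' r → B'.V.card ≤ B.V.card

/-- The reverse of a temporal subgraph, with respect to the ambient lifetime `τ`. -/
noncomputable def revSub (τ : ℕ) (B : TempGraph α) (h : B.τ ≤ τ) : TempGraph α where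
  V := B.V
  A := B.A.image (TArc.rev τ)
  τ := τ
  nonempty := B.nonempty
  valid := by
    intro b hb
    simp only [Finset.mem_image] at hb
    obtain ⟨a, ha, rfl⟩ := hb
    obtain ⟨h1, h2, h3, h4, h5, h6⟩ := B.valid a ha
    refine ⟨h2, h1, Ne.symm h3, ?_, ?_, ?_⟩ <;>
      simp only [TArc.rev, TArc.tail, TArc.head, TArc.ts, TArc.ta] at * <;> omega

/-- `L` (a walk from `u`) is `d`-prefix-optimal: every prefix of it realizes the distance `d`
from `u` to the end vertex of the prefix. -/
def PrefixOptimal (d : DistKind) (S : Finset (TArc α)) (u : α) (L : List (TArc α)) : Prop :=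
  ∀ h ≤ L.length, Realizes d S u (endv u (L.take h)) (L.take h)

/-- `EAd_G(u,v)`: the minimum arrival time among the walks realizing `d_G(u,v)`. -/
noncomputable def eaVal (d : DistKind) (G : TempGraph α) (u v : α) : ℕ∞ :=
  sInf {n : ℕ∞ | ∃ L, Realizes d G.A u v L ∧ n = (taW L : ℕ∞)}

/-- `G'` is a `d`-temporal out-spanning subgraph (d-TOSS) with root `r` of `G`. -/
def IsDTOSS (d : DistKind) (G G' : TempGraph α) (r : α) : Prop :=
  IsSubgraph G' G ∧ G'.V = G.V ∧
    ∀ v ∈ G.V, ∃ L, IsWalk G'.A r v L ∧ Realizes d G.A r v L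

/-- Satisfiability of a CNF formula given by the positive/negative occurrence sets
of its clauses. -/
def Satisfiable (n m : ℕ) (pos neg : Fin m → Finset (Fin n)) : Prop :=
  ∃ σ : Fin n → Bool, ∀ j : Fin m, (∃ i ∈ pos j, σ i = true) ∨ ∃ i ∈ neg j, σ i = false

theorem IsWalk.mono {S T : Finset (TArc α)} (hST : S ⊆ T) {L : List (TArc α)} {u v : α}
    (h : IsWalk S u v L) : IsWalk T u v L := by
  induction L generalizing u with
  | nil => exact h
  | cons a L ih => exact ⟨hST h.1, h.2.1, h.2.2.1, ih h.2.2.2⟩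

theorem taW_append_singleton (L : List (TArc α)) (a : TArc α) :
    taW (L ++ [a]) = TArc.ta a := by
  simp [taW]

theorem ttW_append_singleton (L : List (TArc α)) (a : TArc α) :
    ttW (L ++ [a]) = ttW L + TArc.el a := by
  simp [ttW]

theorem isWalk_append_singleton {S : Finset (TArc α)} {u v : α} {L : List (TArc α)}
    {a : TArc α} :
    IsWalk S u v (L ++ [a]) ↔
      IsWalk S u (TArc.tail a) L ∧ taW L ≤ TArc.ts a ∧ a ∈ S ∧ TArc.head a = v := by
  induction L generalizing u with
  | nil => simp [IsWalk, taW, eq_comm, and_comm, and_assoc]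
  | cons b L ih =>
    simp only [List.cons_append, IsWalk, ih]
    cases L with
    | nil => simp [IsWalk, taW]; tauto
    | cons c L => simp [taW]; tauto

/-- The arrival time of a nontrivial walk exceeds its travelling time and is at most `τ`. -/
theorem IsWalk.taW_bounds {G : TempGraph α} {u v : α} {L : List (TArc α)}
    (h : IsWalk G.A u v L) : (L ≠ [] → ttW L + 1 ≤ taW L) ∧ taW L ≤ G.τ := by
  induction L using List.reverseRecOn generalizing v with
  | nil => simp [taW]
  | append_singleton L a ih =>
    obtain ⟨hL, hta, ha, -⟩ := isWalk_append_singleton.1 h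
    obtain ⟨-, -, -, h1, h2, h3⟩ := G.valid a ha
    obtain ⟨ih, -⟩ := ih hL
    rw [taW_append_singleton, ttW_append_singleton]
    refine ⟨fun _ => ?_, h3⟩
    rcases eq_or_ne L [] with rfl | hne
    · simp only [ttW, List.map_nil, List.sum_nil, TArc.el]
      omega
    · have := ih hne
      simp only [TArc.el]
      omega

/-- Walks are compared by travelling time, then arrival time, then length. -/
def costKey (L : List (TArc α)) : ℕ ×ₗ ℕ ×ₗ ℕ :=
  toLex (ttW L, toLex (taW L, L.length))

theorem costKey_le_iff {L M : List (TArc α)} :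
    costKey L ≤ costKey M ↔ ttW L < ttW M ∨ ttW L = ttW M ∧
      (taW L < taW M ∨ taW L = taW M ∧ L.length ≤ M.length) := by
  simp [costKey, Prod.Lex.toLex_le_toLex]

theorem costKey_lt_iff {L M : List (TArc α)} :
    costKey L < costKey M ↔ ttW L < ttW M ∨ ttW L = ttW M ∧
      (taW L < taW M ∨ taW L = taW M ∧ L.length < M.length) := by
  simp [costKey, Prod.Lex.toLex_lt_toLex]

/-- `L` is a temporal `(u,v)`-walk of minimum cost key. -/
def IsCheapest (S : Finset (TArc α)) (u v : α) (L : List (TArc α)) : Prop :=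
  IsWalk S u v L ∧ ∀ M, IsWalk S u v M → costKey L ≤ costKey M

theorem exists_isCheapest {S : Finset (TArc α)} {u v : α} (h : ∃ L, IsWalk S u v L) :
    ∃ L, IsCheapest S u v L := by
  obtain ⟨L, hL, hmin⟩ := (InvImage.wf costKey wellFounded_lt).has_min
    {L : List (TArc α) | IsWalk S u v L} h
  exact ⟨L, hL, fun M hM => not_lt.1 (hmin M hM)⟩

theorem IsCheapest.ttW_le {S : Finset (TArc α)} {u v : α} {L M : List (TArc α)}
    (h : IsCheapest S u v L) (hM : IsWalk S u v M) : ttW L ≤ ttW M := by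
  have := costKey_le_iff.1 (h.2 M hM)
  omega

/-- For lifetime at most two, a cheapest walk to the tail of the last arc of a cheapest walk
can replace the corresponding prefix. -/
theorem IsCheapest.prefix_replacement {G : TempGraph α} (hτ : G.τ ≤ 2) {r v : α}
    {L M : List (TArc α)} {a : TArc α} (hL : IsCheapest G.A r v (L ++ [a]))
    (hM : IsCheapest G.A r (TArc.tail a) M) :
    ttW M = ttW L ∧ taW M ≤ TArc.ts a ∧ costKey M < costKey (L ++ [a]) := by
  obtain ⟨hwalk, hta, ha, hv⟩ := isWalk_append_singleton.1 hL.1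
  obtain ⟨-, -, -, h1, h2, h3⟩ := G.valid a ha
  have hML := costKey_le_iff.1 (hM.2 L hwalk)
  have hMτ := hM.1.taW_bounds.2
  have htt : ttW M = ttW L := by
    by_contra hne
    have hlt : ttW M < ttW L := by omega
    have hLne : L ≠ [] := by
      rintro rfl
      simp [ttW] at hlt
    have hL2 := hwalk.taW_bounds.1 hLne
    have hnew : IsWalk G.A r v (M ++ [a]) :=
      isWalk_append_singleton.2 ⟨hM.1, by omega, ha, hv⟩
    have := hL.ttW_le hnew
    rw [ttW_append_singleton, ttW_append_singleton] at this
    omega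
  refine ⟨htt, by omega, costKey_lt_iff.2 ?_⟩
  rw [ttW_append_singleton, taW_append_singleton, List.length_append, List.length_singleton]
  omega

theorem IsWalk.exists_head_eq {S : Finset (TArc α)} {u v : α} {L : List (TArc α)}
    (h : IsWalk S u v L) (huv : v ≠ u) : ∃ a ∈ S, TArc.head a = v := by
  rcases List.eq_nil_or_concat L with rfl | ⟨L, a, rfl⟩
  · exact absurd h.symm huv
  · rw [List.concat_eq_append] at h
    exact ⟨a, (isWalk_append_singleton.1 h).2.2⟩

theorem distVal_ST_eq_of_isWalk {G B : TempGraph α} {u v : α} (hA : B.A ⊆ G.A)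
    {L : List (TArc α)} (hL : IsWalk B.A u v L) (hmin : ∀ M, IsWalk G.A u v M → ttW L ≤ ttW M) :
    distVal DistKind.ST B u v = distVal DistKind.ST G u v := by
  simp only [distVal, reduceCtorEq, if_false, wval]
  apply le_antisymm
  · refine le_sInf ?_
    rintro _ ⟨M, hM, rfl⟩
    exact sInf_le_of_le ⟨L, hL, rfl⟩ (Nat.cast_le.2 (hmin M hM))
  · refine sInf_le_sInf ?_
    rintro _ ⟨M, hM, rfl⟩
    exact ⟨M, hM.mono hA, rfl⟩

/-- If every vertex other than `r` has a single incoming arc in `B`, and all vertices are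
reachable from `r`, then `B` is a temporal out-branching. -/
theorem isTOB_of_unique_head {B : TempGraph α} {r : α} (hr : r ∈ B.V)
    (hreach : ReachAll B.A B.V r) (hroot : ∀ a ∈ B.A, TArc.head a ≠ r)
    (huniq : ∀ a ∈ B.A, ∀ b ∈ B.A, TArc.head a = TArc.head b → a = b) : IsTOB B r := by
  refine ⟨hr, hreach, fun S hS hSreach => ?_⟩
  obtain ⟨a, ha, haS⟩ := Finset.exists_of_ssubset hS
  obtain ⟨L, hL⟩ := hSreach _ (B.valid a ha).2.1
  obtain ⟨b, hb, hba⟩ := hL.exists_head_eq (hroot a ha)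
  exact haS (huniq b (hS.1 hb) a ha hba ▸ hb)

theorem exists_spanning_ST_TOB {G : TempGraph α} (hτ : G.τ ≤ 2) {r : α} (hr : r ∈ G.V)
    (hreach : ∀ v ∈ G.V, ∃ L, IsWalk G.A r v L) :
    ∃ B : TempGraph α, IsSpanningDTOB DistKind.ST G B r := by
  choose! C hC using fun v hv => exists_isCheapest (hreach v hv)
  have hlast : ∀ v, ∃ a : TArc α, v ∈ G.V.erase r → ∃ L, C v = L ++ [a] := by
    intro v
    rcases List.eq_nil_or_concat (C v) with h | ⟨L, a, h⟩
    · refine ⟨(r, r, 0, 0), fun hv => ?_⟩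
      obtain ⟨hne, hv⟩ := Finset.mem_erase.1 hv
      have hw := (hC v hv).1
      rw [h] at hw
      exact absurd hw.symm hne
    · exact ⟨a, fun _ => ⟨L, by rw [h, List.concat_eq_append]⟩⟩
  choose p hp using hlast
  have hpG : ∀ v ∈ G.V.erase r, p v ∈ G.A ∧ TArc.head (p v) = v := by
    intro v hv
    obtain ⟨L, hL⟩ := hp v hv
    have hw := (hC v (Finset.mem_of_mem_erase hv)).1
    rw [hL] at hw
    exact (isWalk_append_singleton.1 hw).2.2
  have hsub : (G.V.erase r).image p ⊆ G.A := by
    intro a ha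
    obtain ⟨v, hv, rfl⟩ := Finset.mem_image.1 ha
    exact (hpG v hv).1
  let B : TempGraph α :=
    { V := G.V, A := (G.V.erase r).image p, τ := G.τ, nonempty := G.nonempty,
      valid := fun a ha => G.valid a (hsub ha) }
  have hwalk : ∀ v ∈ G.V, ∃ L, IsWalk B.A r v L ∧ ttW L = ttW (C v) ∧ taW L = taW (C v) := by
    intro v
    induction v using (InvImage.wf (fun v => costKey (C v)) wellFounded_lt).induction with
    | _ v ih =>
      intro hv
      rcases eq_or_ne v r with rfl | hne
      · have hle := costKey_le_iff.1 ((hC v hv).2 [] rfl)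
        refine ⟨[], rfl, ?_⟩
        simp only [ttW, taW, List.map_nil, List.sum_nil, List.getLastD_nil] at hle ⊢
        omega
      · have hv' : v ∈ G.V.erase r := Finset.mem_erase.2 ⟨hne, hv⟩
        obtain ⟨L, hL⟩ := hp v hv'
        have htail := (G.valid _ (hpG v hv').1).1
        have hcheap := hC v hv
        rw [hL] at hcheap
        obtain ⟨htt, hts, hlt⟩ := hcheap.prefix_replacement hτ (hC _ htail)
        obtain ⟨P, hP, hPtt, hPta⟩ := ih _ (by rw [← hL] at hlt; exact hlt) htail
        refine ⟨P ++ [p v], isWalk_append_singleton.2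
          ⟨hP, by omega, Finset.mem_image_of_mem p hv', (hpG v hv').2⟩, ?_, ?_⟩
        · rw [hL, ttW_append_singleton, ttW_append_singleton, hPtt, htt]
        · rw [hL, taW_append_singleton, taW_append_singleton]
  refine ⟨B, ⟨isTOB_of_unique_head hr (fun v hv => (hwalk v hv).imp fun _ h => h.1) ?_ ?_,
    ⟨subset_rfl, hsub, le_rfl⟩, fun v hv => ?_⟩, rfl⟩
  · intro a ha
    obtain ⟨v, hv, rfl⟩ := Finset.mem_image.1 ha
    rw [(hpG v hv).2]
    exact Finset.ne_of_mem_erase hv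
  · intro a ha b hb hab
    obtain ⟨v, hv, rfl⟩ := Finset.mem_image.1 ha
    obtain ⟨w, hw, rfl⟩ := Finset.mem_image.1 hb
    rw [(hpG v hv).2, (hpG w hw).2] at hab
    rw [hab]
  · obtain ⟨L, hL, htt, -⟩ := hwalk v hv
    exact distVal_ST_eq_of_isWalk hsub hL fun M hM => htt ▸ (hC v hv).ttW_le hM

/-- Lemma `claim:STtau`: if `τ ≤ 2`, then `G` has a spanning ST-TOB with
root `r` iff every vertex of `G` is temporally reachable from `r`. -/
theorem stmt_10 {α : Type u} (G : TempGraph α) (hτ : G.τ ≤ 2) (r : α) (hr : r ∈ G.V) :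
    (∃ B : TempGraph α, IsSpanningDTOB DistKind.ST G B r) ↔
      ∀ v ∈ G.V, ∃ L, IsWalk G.A r v L := by
  refine ⟨?_, exists_spanning_ST_TOB hτ hr⟩
  rintro ⟨B, ⟨⟨-, hreach, -⟩, ⟨-, hA, -⟩, -⟩, hV⟩ v hv
  obtain ⟨L, hL⟩ := hreach v (hV ▸ hv)
  exact ⟨L, hL.mono hA⟩
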